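/- arXiv:1307.8310 — 2 statements merged into one kernel-verified Lean document; each statement's English description precedes it below -/
import Mathlib

section
/- Let A be a noetherian commutative ring, t ∈ A, and let Â denote the (t)-adic completion of A. Then the A-algebra Â × A[t^{-1}] (the product ring, with A-algebra structure given by the completion map on the first factor and the localization map on the second) is faithfully flat over A. -/
/-!
Flatness holds factor by factor: completions of noetherian rings and localizations are flat, and a
product of two flat modules is flat. Given flatness, it suffices that every prime `p` of `A`
lies in the image of the spectrum of `Â × A[t⁻¹]`
(`Module.FaithfullyFlat.of_comap_surjective`). If `t ∈ p`, then `p` comes from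
`A ⧸ (t)`, which is a quotient of `Â`; if `t ∉ p`, then `p` comes from `A[t⁻¹]`.
-/

/-- An element of `J ⊗ (M × N)` is recovered from its images in `J ⊗ M` and `J ⊗ N`, so
injectivity after tensoring can be checked on each factor. -/
lemma flat_prod {R M N : Type*} [CommRing R] [AddCommGroup M] [AddCommGroup N] [Module R M]
    [Module R N] [Module.Flat R M] [Module.Flat R N] : Module.Flat R (M × N) := by
  rw [Module.Flat.iff_rTensor_injective']
  intro J
  rw [injective_iff_map_eq_zero]
  intro x hx
  have h1 : (LinearMap.fst R M N).lTensor J x = 0 := by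
    apply Module.Flat.rTensor_preserves_injective_linearMap (M := M) _ J.injective_subtype
    rw [map_zero, ← LinearMap.comp_apply, LinearMap.rTensor_comp_lTensor,
      ← LinearMap.lTensor_comp_rTensor, LinearMap.comp_apply, hx, map_zero]
  have h2 : (LinearMap.snd R M N).lTensor J x = 0 := by
    apply Module.Flat.rTensor_preserves_injective_linearMap (M := N) _ J.injective_subtype
    rw [map_zero, ← LinearMap.comp_apply, LinearMap.rTensor_comp_lTensor,
      ← LinearMap.lTensor_comp_rTensor, LinearMap.comp_apply, hx, map_zero]
  have hid : LinearMap.inl R M N ∘ₗ LinearMap.fst R M N +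
      LinearMap.inr R M N ∘ₗ LinearMap.snd R M N = LinearMap.id := by
    ext <;> simp
  rw [← LinearMap.id_apply (R := R) x, ← LinearMap.lTensor_id, ← hid, LinearMap.lTensor_add,
    LinearMap.lTensor_comp, LinearMap.lTensor_comp, LinearMap.add_apply, LinearMap.comp_apply,
    LinearMap.comp_apply, h1, h2, map_zero, map_zero, add_zero]

/-- for a noetherian commutative ring `A` and `t ∈ A`, the `A`-algebra
`Â × A[t⁻¹]` (product of the `(t)`-adic completion and the localization away from `t`)
is faithfully flat over `A`. -/
theorem stmt_5 {A : Type*} [CommRing A] [IsNoetherianRing A] (t : A) :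
    Module.FaithfullyFlat A
      (AdicCompletion (Ideal.span {t}) A × Localization.Away t) := by
  have : Module.Flat A (AdicCompletion (Ideal.span {t}) A × Localization.Away t) := flat_prod
  apply Module.FaithfullyFlat.of_comap_surjective
  intro p
  by_cases ht : t ∈ p.asIdeal
  · have hp : p ∈ Set.range (PrimeSpectrum.comap (Ideal.Quotient.mk (Ideal.span {t}))) := by
      rw [range_comap_of_surjective _ _ Ideal.Quotient.mk_surjective]
      simpa [PrimeSpectrum.mem_zeroLocus] using ht
    obtain ⟨q, rfl⟩ := hp
    exact ⟨PrimeSpectrum.comap ((AdicCompletion.evalOneₐ (Ideal.span {t})).toRingHom.comp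
      (RingHom.fst _ (Localization.Away t))) q, rfl⟩
  · have hp : p ∈ Set.range (PrimeSpectrum.comap (algebraMap A (Localization.Away t))) := by
      rw [PrimeSpectrum.localization_away_comap_range _ t]
      exact ht
    obtain ⟨q, rfl⟩ := hp
    exact ⟨PrimeSpectrum.comap
      (RingHom.snd (AdicCompletion (Ideal.span {t}) A) (Localization.Away t)) q, rfl⟩
end

section
/- Let A be a noetherian commutative ring, t ∈ A, let Â denote the (t)-adic completion of A, and let M be an A-module. Then the sequence 0 → M → (M ⊗_A Â) ⊕ M[t^{-1}] → (M ⊗_A Â)[t^{-1}] is exact, where the first map sends m to (m ⊗ 1, m/1) and the second map is the difference of the two natural maps into (M ⊗_A Â)[t^{-1}]. Equivalently, the commutative square formed by M, M ⊗_A Â, M[t^{-1}] and (M ⊗_A Â)[t^{-1}] with the natural maps is a pullback square of A-modules. -/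
open TensorProduct

/-!
Write `i : M → M ⊗ Â`. If `K` is killed by `t ^ n`, then `K → K ⊗ Â` is bijective: it is onto because
`Â = A + t ^ n Â`, and it has a retraction because `Â → A / t ^ n` lets `Â` act on `K`
(`tmul_one_bijective_of_pow_smul_eq_zero`). Applied to the `t ^ n`-torsion of `M`, together with
flatness of `Â` over the noetherian ring `A`, this shows that `i` is bijective on
`t ^ n`-torsion (`existsUnique_tmul_one_of_pow_smul_eq_zero`); applied to `M / t ^ n M` it shows that
`i m ∈ t ^ n (M ⊗ Â)` forces `m ∈ t ^ n M` (`exists_pow_smul_eq_of_tmul_one_eq`).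

An element of the kernel of `M → M[t⁻¹]` is `t`-power torsion, so the first fact gives injectivity.
Two elements `x` and `m / t ^ n` agreeing in `(M ⊗ Â)[t⁻¹]` satisfy `t ^ N x = i m'` with
`m / t ^ n = m' / t ^ N`. The second fact gives `m' = t ^ N m₁`; then `x - i m₁` is killed by
`t ^ N`, hence equals `i m₂` with `t ^ N m₂ = 0`, and `m₁ + m₂` is the required preimage.
-/

section

variable {A : Type*} [CommRing A] (t : A)

theorem AdicCompletion.exists_eq_smul_one_add_pow_smul (n : ℕ)
    (a : AdicCompletion (Ideal.span {t}) A) :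
    ∃ (a₀ : A) (b : AdicCompletion (Ideal.span {t}) A), a = a₀ • 1 + t ^ n • b := by
  obtain ⟨a₀, ha₀⟩ := Submodule.mkQ_surjective _ (AdicCompletion.eval (Ideal.span {t}) A n a)
  have hmem : a - AdicCompletion.of (Ideal.span {t}) A a₀ ∈
      (AdicCompletion.eval (Ideal.span {t}) A n).ker := by
    rw [LinearMap.mem_ker, map_sub, AdicCompletion.eval_of, ha₀, sub_self]
  rw [← AdicCompletion.pow_smul_top_eq_ker_eval ⟨{t}, by simp⟩, Ideal.span_singleton_pow,
    Submodule.ideal_span_singleton_smul] at hmem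
  obtain ⟨b, -, hb⟩ := hmem
  refine ⟨a₀, b, ?_⟩
  have h1 : AdicCompletion.of (Ideal.span {t}) A a₀ =
      a₀ • (1 : AdicCompletion (Ideal.span {t}) A) := by
    have : AdicCompletion.of (Ideal.span {t}) A 1 = 1 := rfl
    rw [← this, ← map_smul, smul_eq_mul, mul_one]
  have hb' : t ^ n • b = a - AdicCompletion.of (Ideal.span {t}) A a₀ := hb
  rw [hb', ← h1]
  abel

theorem tmul_one_bijective_of_pow_smul_eq_zero (n : ℕ) {K : Type*} [AddCommGroup K] [Module A K]
    (hK : ∀ k : K, t ^ n • k = 0) :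
    Function.Bijective
      (fun k : K => k ⊗ₜ[A] (1 : AdicCompletion (Ideal.span {t}) A)) := by
  constructor
  · let act : (A ⧸ ((Ideal.span {t}) ^ n • ⊤ : Submodule A A)) →ₗ[A] K →ₗ[A] K :=
      Submodule.liftQ _ (LinearMap.lsmul A K) (by
        rw [Ideal.span_singleton_pow, Submodule.ideal_span_singleton_smul]
        rintro _ ⟨b, -, rfl⟩
        ext k
        change (t ^ n * b) • k = 0
        rw [mul_smul, hK])
    let r : K ⊗[A] AdicCompletion (Ideal.span {t}) A →ₗ[A] K :=
      TensorProduct.lift (act ∘ₗ AdicCompletion.eval (Ideal.span {t}) A n).flip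
    refine Function.LeftInverse.injective (g := r) fun k => ?_
    change (1 : A) • k = k
    exact one_smul A k
  · intro x
    induction x with
    | zero => exact ⟨0, TensorProduct.zero_tmul _ _⟩
    | add x y hx hy =>
      obtain ⟨k, rfl⟩ := hx
      obtain ⟨l, rfl⟩ := hy
      exact ⟨k + l, TensorProduct.add_tmul _ _ _⟩
    | tmul k a =>
      obtain ⟨a₀, b, rfl⟩ := AdicCompletion.exists_eq_smul_one_add_pow_smul t n a
      refine ⟨a₀ • k, ?_⟩
      dsimp only
      rw [TensorProduct.tmul_add, ← TensorProduct.smul_tmul, ← TensorProduct.smul_tmul, hK,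
        TensorProduct.zero_tmul, add_zero]

variable {M : Type*} [AddCommGroup M] [Module A M]

theorem exists_pow_smul_eq_of_tmul_one_eq (n : ℕ) (m : M)
    (x : M ⊗[A] AdicCompletion (Ideal.span {t}) A) (h : t ^ n • x = m ⊗ₜ 1) :
    ∃ m₁ : M, t ^ n • m₁ = m := by
  let R := LinearMap.range (LinearMap.lsmul A M (t ^ n))
  have hK : ∀ k : M ⧸ R, t ^ n • k = 0 := by
    intro k
    obtain ⟨k, rfl⟩ := R.mkQ_surjective k
    rw [← map_smul]
    exact (Submodule.Quotient.mk_eq_zero R).2 ⟨k, rfl⟩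
  have hq : R.mkQ m ⊗ₜ[A] (1 : AdicCompletion (Ideal.span {t}) A) = 0 := by
    rw [← LinearMap.rTensor_tmul, ← h, map_smul]
    obtain ⟨k, hk⟩ := (tmul_one_bijective_of_pow_smul_eq_zero t n hK).2
      (R.mkQ.rTensor (AdicCompletion (Ideal.span {t}) A) x)
    rw [← hk]
    dsimp only
    rw [TensorProduct.smul_tmul', hK, TensorProduct.zero_tmul]
  have hm : R.mkQ m = 0 :=
    (tmul_one_bijective_of_pow_smul_eq_zero t n hK).1
      (hq.trans (TensorProduct.zero_tmul _ _).symm)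
  exact (Submodule.Quotient.mk_eq_zero R).1 hm

/-- The natural map `M → M ⊗ Â` restricts to a bijection on `t ^ n`-torsion: by flatness of `Â`, the
`t ^ n`-torsion of `M ⊗ Â` is `K ⊗ Â`, where `K` is that of `M`. -/
theorem existsUnique_tmul_one_of_pow_smul_eq_zero [IsNoetherianRing A] (n : ℕ)
    (x : M ⊗[A] AdicCompletion (Ideal.span {t}) A) (hx : t ^ n • x = 0) :
    ∃! m : M, t ^ n • m = 0 ∧ m ⊗ₜ 1 = x := by
  let f := LinearMap.lsmul A M (t ^ n)
  let K := LinearMap.ker f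
  have hK : ∀ k : K, t ^ n • k = 0 := fun k => Subtype.ext k.2
  have hbij := tmul_one_bijective_of_pow_smul_eq_zero t n hK
  have hinj := Module.Flat.rTensor_preserves_injective_linearMap
    (M := AdicCompletion (Ideal.span {t}) A) K.subtype K.injective_subtype
  have hex := Module.Flat.rTensor_exact (AdicCompletion (Ideal.span {t}) A)
    (LinearMap.exact_subtype_ker_map f)
  have hf : f.rTensor (AdicCompletion (Ideal.span {t}) A) x = 0 := by
    have : f = t ^ n • LinearMap.id := rfl
    rw [this, LinearMap.rTensor_smul, LinearMap.rTensor_id]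
    exact hx
  obtain ⟨z, rfl⟩ := (hex x).1 hf
  obtain ⟨k, rfl⟩ := hbij.2 z
  refine ⟨k, ⟨k.2, rfl⟩, ?_⟩
  rintro m ⟨hm, hmx⟩
  exact congrArg Subtype.val (hbij.1 (hinj hmx) : (⟨m, hm⟩ : K) = k)

end

/-- for `A` noetherian, `t ∈ A`, `Â` the `(t)`-adic completion and `M` an
`A`-module, the sequence `0 → M → (M ⊗_A Â) ⊕ M[t⁻¹] → (M ⊗_A Â)[t⁻¹]` is exact, where
the first map is `m ↦ (m ⊗ 1, m/1)` and the second is the difference of the two natural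
maps; i.e. the square formed by `M`, `M ⊗_A Â`, `M[t⁻¹]`, `(M ⊗_A Â)[t⁻¹]` is a
pullback of `A`-modules. -/
theorem stmt_6 {A : Type*} [CommRing A] [IsNoetherianRing A] (t : A)
    {M : Type*} [AddCommGroup M] [Module A M] :
    Function.Injective
      (LinearMap.prod
        ((TensorProduct.mk A M (AdicCompletion (Ideal.span {t}) A)).flip 1)
        (LocalizedModule.mkLinearMap (Submonoid.powers t) M)) ∧
    Function.Exact
      (LinearMap.prod
        ((TensorProduct.mk A M (AdicCompletion (Ideal.span {t}) A)).flip 1)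
        (LocalizedModule.mkLinearMap (Submonoid.powers t) M))
      ((LocalizedModule.mkLinearMap (Submonoid.powers t)
          (M ⊗[A] AdicCompletion (Ideal.span {t}) A)).comp
        (LinearMap.fst A (M ⊗[A] AdicCompletion (Ideal.span {t}) A)
          (LocalizedModule (Submonoid.powers t) M)) -
       (IsLocalizedModule.map (Submonoid.powers t)
          (LocalizedModule.mkLinearMap (Submonoid.powers t) M)
          (LocalizedModule.mkLinearMap (Submonoid.powers t)
            (M ⊗[A] AdicCompletion (Ideal.span {t}) A))
          ((TensorProduct.mk A M (AdicCompletion (Ideal.span {t}) A)).flip 1)).comp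
        (LinearMap.snd A (M ⊗[A] AdicCompletion (Ideal.span {t}) A)
          (LocalizedModule (Submonoid.powers t) M))) := by
  constructor
  · rw [injective_iff_map_eq_zero]
    intro m hm
    have h1 : m ⊗ₜ[A] (1 : AdicCompletion (Ideal.span {t}) A) = 0 := congrArg Prod.fst hm
    have h2 : LocalizedModule.mkLinearMap (Submonoid.powers t) M m = 0 := congrArg Prod.snd hm
    obtain ⟨⟨_, n, rfl⟩, hn⟩ := (IsLocalizedModule.eq_zero_iff (Submonoid.powers t) _).1 h2
    exact (existsUnique_tmul_one_of_pow_smul_eq_zero t n 0 (smul_zero _)).unique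
      ⟨hn, h1⟩ ⟨smul_zero _, TensorProduct.zero_tmul _ _⟩
  · rintro ⟨x, y⟩
    constructor
    · intro h
      obtain ⟨⟨m, ⟨_, n, rfl⟩⟩, rfl⟩ := IsLocalizedModule.mk'_surjective (Submonoid.powers t)
        (LocalizedModule.mkLinearMap (Submonoid.powers t) M) y
      simp only [LinearMap.sub_apply, LinearMap.comp_apply, LinearMap.fst_apply,
        LinearMap.snd_apply, Function.uncurry_apply_pair, IsLocalizedModule.map_mk',
        sub_eq_zero] at h
      have h' := (IsLocalizedModule.mk'_eq_iff.1 h.symm)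
      rw [← LinearMap.map_smul_of_tower, IsLocalizedModule.eq_iff_exists (Submonoid.powers t)] at h'
      obtain ⟨⟨_, k, rfl⟩, hk⟩ := h'
      have hk' : t ^ (k + n) • x = (t ^ k • m) ⊗ₜ 1 := by
        rw [pow_add, mul_smul]
        exact hk.symm
      obtain ⟨m₁, hm₁⟩ := exists_pow_smul_eq_of_tmul_one_eq t (k + n) _ x hk'
      obtain ⟨m₂, ⟨hm₂, hx⟩, -⟩ := existsUnique_tmul_one_of_pow_smul_eq_zero t (k + n)
        (x - m₁ ⊗ₜ 1) (by rw [smul_sub, TensorProduct.smul_tmul', hm₁, hk', sub_self])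
      refine ⟨m₁ + m₂, Prod.ext ?_ ?_⟩
      · change (m₁ + m₂) ⊗ₜ[A] (1 : AdicCompletion (Ideal.span {t}) A) = x
        rw [TensorProduct.add_tmul, hx]
        abel
      · change LocalizedModule.mkLinearMap (Submonoid.powers t) M (m₁ + m₂) =
          IsLocalizedModule.mk' _ m _
        refine (IsLocalizedModule.mk'_eq_iff.2 ?_).symm
        rw [← LinearMap.map_smul_of_tower, IsLocalizedModule.eq_iff_exists (Submonoid.powers t)]
        refine ⟨⟨t ^ k, k, rfl⟩, ?_⟩
        change t ^ k • m = t ^ k • t ^ n • (m₁ + m₂)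
        rw [← mul_smul, ← pow_add, smul_add, hm₁, hm₂, add_zero]
    · rintro ⟨m, hm⟩
      rw [← hm]
      simp only [LinearMap.sub_apply, LinearMap.comp_apply, LinearMap.prod_apply, Function.prod,
        LinearMap.fst_apply, LinearMap.snd_apply, IsLocalizedModule.map_apply, sub_self]
end
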